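/- Let G be a finite connected simple graph containing two distinct vertices A and B that are joined by three pairwise distinct paths such that any two of these paths have only the vertices A and B in common. Then the sages win on G. -/

import Mathlib

/-!
Fix three paths from `A` to `B` and give each of them one guessing rule, used by all its inner
vertices: the sage at the `k`-th vertex guesses `innerGuess i` (or `firstGuess i` for `k = 1`) of
the colors of the preceding and the following vertex of the `i`-th path. The rules are chosen
together with a function `rank i` on pairs of colors such that, as long as the inner sages of the
path are wrong, the rank of the pair of colors at consecutive vertices cannot increase along the
path (`rank_step`), and it starts below a value `bound i` that depends only on the colors of `A`
and of the first inner vertex (`rank_first`). So if all the inner sages are wrong, then whatever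
the length `n ≥ 2` of the path, the colors `a, x` of its first two vertices and `y, b` of its last
two satisfy the *link inequality* `rank i y b < bound i a x` (`link`). If the path is a single edge
then `x = b` and `y = a`; this happens for at most one of the three paths.

What is left is a finite problem that no longer mentions the lengths: `A` sees `x₀, x₁, x₂`, `B`
sees `y₀, y₁, y₂`, the link inequalities hold, except that on one path they may be replaced by
`x = b`, `y = a`. The tables `guessA` and `guessB` solve it, which is checked by evaluation
(`ends_win` and `ends_win_edge₀`, `ends_win_edge₁`, `ends_win_edge₂`). All sages outside the three
paths guess `0`.
-/

/-- A strategy in the "Hats" game: each sage `v` maps a coloring of his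
neighbourhood to a guess in `Fin 3`. -/
def HatStrategy {V : Type*} (G : SimpleGraph V) : Type _ :=
  ∀ v : V, (G.neighborSet v → Fin 3) → Fin 3

/-- The sage at `v` guesses his own hat color correctly for placement `c`. -/
def GuessesRight {V : Type*} {G : SimpleGraph V} (f : HatStrategy G)
    (c : V → Fin 3) (v : V) : Prop :=
  f v (fun u => c u.1) = c v

/-- The sages win the "Hats" game on `G`. -/
def SagesWin {V : Type*} (G : SimpleGraph V) : Prop :=
  ∃ f : HatStrategy G, ∀ c : V → Fin 3, ∃ v : V, GuessesRight f c v

/-! ### The tables -/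

/-- Guess of an inner sage of path `i` who sees the color `p` on the preceding vertex and `r` on
the following one. -/
def innerGuess (i p r : Fin 3) : Fin 3 :=
  ![![![2, 1, 1], ![0, 0, 0], ![2, 1, 1]],
    ![![1, 2, 1], ![1, 2, 1], ![0, 2, 0]],
    ![![2, 2, 2], ![0, 0, 1], ![0, 0, 1]]] i p r

/-- Guess of the inner sage of path `i` adjacent to `A`; it differs from `innerGuess` on one path
only. -/
def firstGuess (i p r : Fin 3) : Fin 3 :=
  ![![![2, 1, 1], ![0, 0, 0], ![2, 1, 1]],
    ![![1, 2, 1], ![1, 2, 1], ![0, 2, 0]],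
    ![![0, 0, 2], ![1, 1, 1], ![0, 0, 1]]] i p r

/-- A potential on pairs of colors of consecutive vertices of path `i`, nonincreasing along the
path as long as the inner sages are wrong. -/
def rank (i p q : Fin 3) : ℕ :=
  ![![![4, 2, 3], ![0, 6, 5], ![5, 1, 1]],
    ![![5, 1, 4], ![7, 0, 6], ![2, 7, 3]],
    ![![8, 7, 0], ![1, 2, 6], ![3, 4, 5]]] i p q

/-- Strict upper bound for the rank after the first inner vertex of path `i`, in terms of the
colors of `A` and of that vertex. -/
def bound (i a x : Fin 3) : ℕ :=
  ![![![5, 1, 3], ![0, 7, 6], ![5, 1, 2]],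
    ![![6, 1, 5], ![7, 1, 7], ![2, 8, 4]],
    ![![1, 7, 5], ![9, 0, 8], ![1, 3, 6]]] i a x

/-- Guess of the sage at `A` from the colors of the second vertices of the three paths. -/
def guessA (x₀ x₁ x₂ : Fin 3) : Fin 3 :=
  ![![![0, 0, 0], ![2, 2, 2], ![0, 0, 2]],
    ![![1, 1, 1], ![2, 2, 2], ![1, 1, 1]],
    ![![1, 0, 1], ![2, 2, 2], ![1, 0, 1]]] x₀ x₁ x₂

/-- Guess of the sage at `B` from the colors of the last but one vertices of the three paths. -/
def guessB (y₀ y₁ y₂ : Fin 3) : Fin 3 :=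
  ![![![2, 1, 1], ![1, 1, 1], ![2, 0, 0]],
    ![![0, 0, 0], ![1, 1, 1], ![0, 0, 0]],
    ![![2, 1, 1], ![1, 1, 1], ![2, 0, 2]]] y₀ y₁ y₂

theorem rank_step : ∀ i p q r : Fin 3, innerGuess i p r ≠ q → rank i q r ≤ rank i p q := by
  decide +kernel

theorem rank_first : ∀ i a x r : Fin 3, firstGuess i a r ≠ x → rank i x r < bound i a x := by
  decide +kernel

theorem ends_win : ∀ a b x₀ y₀ : Fin 3, rank 0 y₀ b < bound 0 a x₀ →
    ∀ x₁ y₁, rank 1 y₁ b < bound 1 a x₁ → ∀ x₂ y₂, rank 2 y₂ b < bound 2 a x₂ →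
    guessA x₀ x₁ x₂ = a ∨ guessB y₀ y₁ y₂ = b := by
  decide +kernel

theorem ends_win_edge₀ : ∀ a b x₁ y₁ : Fin 3, rank 1 y₁ b < bound 1 a x₁ →
    ∀ x₂ y₂, rank 2 y₂ b < bound 2 a x₂ → guessA b x₁ x₂ = a ∨ guessB a y₁ y₂ = b := by
  decide +kernel

theorem ends_win_edge₁ : ∀ a b x₀ y₀ : Fin 3, rank 0 y₀ b < bound 0 a x₀ →
    ∀ x₂ y₂, rank 2 y₂ b < bound 2 a x₂ → guessA x₀ b x₂ = a ∨ guessB y₀ a y₂ = b := by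
  decide +kernel

theorem ends_win_edge₂ : ∀ a b x₀ y₀ : Fin 3, rank 0 y₀ b < bound 0 a x₀ →
    ∀ x₁ y₁, rank 1 y₁ b < bound 1 a x₁ → guessA x₀ x₁ b = a ∨ guessB y₀ y₁ a = b := by
  decide +kernel

/-! ### Strategies and paths -/

/-- A strategy may be given by guesses that are functions of the whole placement, as long as each
of them depends only on the colors of the neighbours. -/
theorem sagesWin_of_local {V : Type*} {G : SimpleGraph V} (g : V → (V → Fin 3) → Fin 3)
    (hloc : ∀ v c c', (∀ u, G.Adj v u → c u = c' u) → g v c = g v c')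
    (hwin : ∀ c, ∃ v, g v c = c v) : SagesWin G := by
  classical
  refine ⟨fun v η => g v (fun u => if h : G.Adj v u then η ⟨u, h⟩ else 0), fun c => ?_⟩
  obtain ⟨v, hv⟩ := hwin c
  refine ⟨v, Eq.trans (hloc _ _ _ fun u hu => ?_) hv⟩
  simp [hu]

/-- Along a path whose inner sages are all wrong, the link inequality holds; `d k` is the color of
the `k`-th vertex of the path and `n` its length. -/
theorem link (i : Fin 3) (d : ℕ → Fin 3) (n : ℕ) (hn : 2 ≤ n)
    (h1 : firstGuess i (d 0) (d 2) ≠ d 1)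
    (h : ∀ k, 2 ≤ k → k < n → innerGuess i (d (k - 1)) (d (k + 1)) ≠ d k) :
    rank i (d (n - 1)) (d n) < bound i (d 0) (d 1) := by
  induction n, hn using Nat.le_induction with
  | base => exact rank_first _ _ _ _ h1
  | succ m hm ih =>
    have h2 := ih fun k hk hkm => h k hk (by omega)
    exact (rank_step _ _ _ _ (h m hm (by omega))).trans_lt h2

/-- The result for three internally disjoint paths given as a family indexed by `Fin 3`. -/
theorem sagesWin_of_paths {V : Type*} (G : SimpleGraph V) (A B : V) (hAB : A ≠ B)
    (p : Fin 3 → G.Walk A B) (hp : ∀ i, (p i).IsPath) (hinj : Function.Injective p)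
    (hdisj : ∀ i j, i ≠ j → ∀ x, x ∈ (p i).support → x ∈ (p j).support → x = A ∨ x = B) :
    SagesWin G := by
  classical
  have hpos : ∀ i, 0 < (p i).length := fun i =>
    Nat.pos_of_ne_zero fun h => hAB (SimpleGraph.Walk.eq_of_length_eq_zero h)
  have hgv : ∀ i k l, k ≤ (p i).length → l ≤ (p i).length →
      (p i).getVert k = (p i).getVert l → k = l := fun i k l hk hl h =>
    (hp i).getVert_injOn hk hl h
  have hinA : ∀ i k, 0 < k → k < (p i).length → (p i).getVert k ≠ A := fun i k h0 hk h => by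
    have := hgv i k 0 hk.le (Nat.zero_le _) (by simpa using h)
    omega
  have hinB : ∀ i k, 0 < k → k < (p i).length → (p i).getVert k ≠ B := fun i k h0 hk h => by
    have := hgv i k _ hk.le le_rfl (by simpa using h)
    omega
  have huniq : ∀ i j k l, 0 < k → k < (p i).length → 0 < l → l < (p j).length →
      (p i).getVert k = (p j).getVert l → i = j ∧ k = l := by
    intro i j k l hk hki hl hlj h
    have hij : i = j := by
      by_contra hij
      rcases hdisj i j hij _ ((p i).getVert_mem_support k)
        (h ▸ (p j).getVert_mem_support l) with h' | h'
      · exact hinA i k hk hki h'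
      · exact hinB i k hk hki h'
    subst hij
    exact ⟨rfl, hgv i k l hki.le hlj.le h⟩
  have hadj : ∀ i k, k < (p i).length → G.Adj ((p i).getVert k) ((p i).getVert (k + 1)) :=
    fun i k hk => (p i).adj_getVert_succ hk
  have hadjA : ∀ i, G.Adj A ((p i).getVert 1) := fun i => by simpa using hadj i 0 (hpos i)
  have hadjB : ∀ i, G.Adj B ((p i).getVert ((p i).length - 1)) := fun i => by
    have := hadj i ((p i).length - 1) (Nat.sub_lt (hpos i) one_pos)
    rw [Nat.sub_add_cancel (show 1 ≤ _ from hpos i), SimpleGraph.Walk.getVert_length] at this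
    exact this.symm
  -- The guesses, each a function of the placement that depends on the neighbours only.
  have hex : ∀ v : V, ∃ g : (V → Fin 3) → Fin 3,
      (∀ c c', (∀ u, G.Adj v u → c u = c' u) → g c = g c') ∧
      (v = A → ∀ c, g c = guessA (c ((p 0).getVert 1)) (c ((p 1).getVert 1))
        (c ((p 2).getVert 1))) ∧
      (v = B → ∀ c, g c = guessB (c ((p 0).getVert ((p 0).length - 1)))
        (c ((p 1).getVert ((p 1).length - 1))) (c ((p 2).getVert ((p 2).length - 1)))) ∧
      ∀ i k, 0 < k → k < (p i).length → v = (p i).getVert k → ∀ c,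
        g c = (if k = 1 then firstGuess i else innerGuess i)
          (c ((p i).getVert (k - 1))) (c ((p i).getVert (k + 1))) := by
    intro v
    by_cases hvA : v = A
    · subst hvA
      refine ⟨_, fun c c' h => ?_, fun _ c => rfl, fun h => absurd h hAB,
        fun i k hk hki h => absurd h.symm (hinA i k hk hki)⟩
      simp only [h _ (hadjA _)]
    by_cases hvB : v = B
    · subst hvB
      refine ⟨_, fun c c' h => ?_, fun h => absurd h hvA, fun _ c => rfl,
        fun i k hk hki h => absurd h.symm (hinB i k hk hki)⟩
      simp only [h _ (hadjB _)]
    by_cases hv : ∃ i k, 0 < k ∧ k < (p i).length ∧ v = (p i).getVert k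
    · obtain ⟨i, k, hk, hki, hvk⟩ := hv
      refine ⟨fun c => (if k = 1 then firstGuess i else innerGuess i)
          (c ((p i).getVert (k - 1))) (c ((p i).getVert (k + 1))), fun c c' h => ?_,
        fun h => absurd h hvA, fun h => absurd h hvB, ?_⟩
      · have h1 : G.Adj v ((p i).getVert (k - 1)) := by
          have := hadj i (k - 1) (by omega)
          rw [Nat.sub_add_cancel (show 1 ≤ _ from hk), ← hvk] at this
          exact this.symm
        have h2 : G.Adj v ((p i).getVert (k + 1)) := hvk ▸ hadj i k hki
        simp only [h _ h1, h _ h2]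
      · intro j l hl hlj hvl c
        obtain ⟨rfl, rfl⟩ := huniq i j k l hk hki hl hlj (hvk ▸ hvl)
        rfl
    · exact ⟨fun _ => 0, fun _ _ _ => rfl, fun h => absurd h hvA, fun h => absurd h hvB,
        fun i k hk hki h => absurd ⟨i, k, hk, hki, h⟩ hv⟩
  choose g hloc hgA hgB hgI using hex
  refine sagesWin_of_local g hloc fun c => ?_
  by_contra! hwrong
  have hA := hwrong A
  have hB := hwrong B
  rw [hgA A rfl] at hA
  rw [hgB B rfl] at hB
  have hlink : ∀ i, 2 ≤ (p i).length →
      rank i (c ((p i).getVert ((p i).length - 1))) (c B) < bound i (c A) (c ((p i).getVert 1)) := by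
    intro i hi
    have := link i (fun k => c ((p i).getVert k)) (p i).length hi
      (by simpa [hgI _ i 1 one_pos hi rfl] using hwrong ((p i).getVert 1))
      (fun k hk hki => by
        have := hwrong ((p i).getVert k)
        rwa [hgI _ i k (by omega) hki rfl, if_neg (by omega)] at this)
    simpa using this
  have hedge : ∀ i, ¬ 2 ≤ (p i).length →
      c ((p i).getVert 1) = c B ∧ c ((p i).getVert ((p i).length - 1)) = c A := by
    intro i hi
    have h1 : (p i).length = 1 := by have := hpos i; omega
    have h2 := (p i).getVert_length
    rw [h1] at h2
    simp [h1, h2]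
  have hone : ∀ i j, i ≠ j → ¬ 2 ≤ (p i).length → 2 ≤ (p j).length := by
    intro i j hij hi
    by_contra hj
    have h1 : (p i).length = 1 := by have := hpos i; omega
    have h2 : (p j).length = 1 := by have := hpos j; omega
    refine hij (hinj (SimpleGraph.Walk.ext_getVert_le_length (h1.trans h2.symm) fun k hk => ?_))
    have h3 := (p i).getVert_length
    have h4 := (p j).getVert_length
    rw [h1] at h3 hk
    rw [h2] at h4
    interval_cases k
    · simp
    · rw [h3, h4]
  by_cases h0 : 2 ≤ (p 0).length
  · by_cases h1 : 2 ≤ (p 1).length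
    · by_cases h2 : 2 ≤ (p 2).length
      · rcases ends_win _ _ _ _ (hlink 0 h0) _ _ (hlink 1 h1) _ _ (hlink 2 h2) with h | h
        · exact hA h
        · exact hB h
      · rw [(hedge 2 h2).1] at hA
        rw [(hedge 2 h2).2] at hB
        exact (ends_win_edge₂ _ _ _ _ (hlink 0 h0) _ _ (hlink 1 h1)).elim hA hB
    · have h2 := hone 1 2 (by decide) h1
      rw [(hedge 1 h1).1] at hA
      rw [(hedge 1 h1).2] at hB
      exact (ends_win_edge₁ _ _ _ _ (hlink 0 h0) _ _ (hlink 2 h2)).elim hA hB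
  · have h1 := hone 0 1 (by decide) h0
    have h2 := hone 0 2 (by decide) h0
    rw [(hedge 0 h0).1] at hA
    rw [(hedge 0 h0).2] at hB
    exact (ends_win_edge₀ _ _ _ _ (hlink 1 h1) _ _ (hlink 2 h2)).elim hA hB

theorem win_three_paths {V : Type*} [Fintype V] (G : SimpleGraph V)
    (hG : G.Connected) (A B : V) (hAB : A ≠ B)
    (p₁ p₂ p₃ : G.Walk A B)
    (hp₁ : p₁.IsPath) (hp₂ : p₂.IsPath) (hp₃ : p₃.IsPath)
    (hne : p₁ ≠ p₂ ∧ p₁ ≠ p₃ ∧ p₂ ≠ p₃)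
    (hcommon : ∀ (p q : G.Walk A B), (p = p₁ ∨ p = p₂ ∨ p = p₃) →
      (q = p₁ ∨ q = p₂ ∨ q = p₃) → p ≠ q →
      ∀ x : V, x ∈ p.support → x ∈ q.support → x = A ∨ x = B) :
    SagesWin G := by
  obtain ⟨h12, h13, h23⟩ := hne
  have hinj : Function.Injective ![p₁, p₂, p₃] := by
    intro i j h
    fin_cases i <;> fin_cases j <;> simp_all [eq_comm]
  have hmem : ∀ i, ![p₁, p₂, p₃] i = p₁ ∨ ![p₁, p₂, p₃] i = p₂ ∨ ![p₁, p₂, p₃] i = p₃ := by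
    intro i
    fin_cases i <;> simp
  refine sagesWin_of_paths G A B hAB ![p₁, p₂, p₃] (fun i => ?_) hinj fun i j hij =>
    hcommon _ _ (hmem i) (hmem j) (hinj.ne hij)
  fin_cases i
  exacts [hp₁, hp₂, hp₃]
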